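/- Let T ⊂ R^2 be a nondegenerate triangle, f a convex C^2 function on T, and e an edge of T with endpoints z₀, z₁. Then the L¹ interpolation error decrease D_T(e,f) satisfies D_T(e,f) = (|T|/6)·∫₀¹ ⟨d²f(z_t)·(z₁−z₀), z₁−z₀⟩·min{t, 1−t} dt, where z_t = (1−t)z₀ + t z₁. -/

import Mathlib

open MeasureTheory

/-- The 2D cross product / determinant of two vectors of `ℝ × ℝ`. -/
noncomputable def det2 (u v : ℝ × ℝ) : ℝ := u.1 * v.2 - u.2 * v.1

/-- The area of the triangle with vertices `p0, p1, p2`. -/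
noncomputable def triArea (p0 p1 p2 : ℝ × ℝ) : ℝ := |det2 (p1 - p0) (p2 - p0)| / 2

/-- The (closed) triangle with vertices `p0, p1, p2`. -/
def tri (p0 p1 p2 : ℝ × ℝ) : Set (ℝ × ℝ) := convexHull ℝ {p0, p1, p2}

/-- The affine interpolation of `f` at the vertices `p0, p1, p2`, written with
barycentric coordinates; for affinely independent vertices it is the unique
affine function agreeing with `f` at the three vertices. -/
noncomputable def interp (p0 p1 p2 : ℝ × ℝ) (f : ℝ × ℝ → ℝ) (x : ℝ × ℝ) : ℝ :=
  (det2 (p1 - x) (p2 - x) * f p0 + det2 (p2 - x) (p0 - x) * f p1 +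
    det2 (p0 - x) (p1 - x) * f p2) / det2 (p1 - p0) (p2 - p0)

/-- The `L¹` interpolation error `‖f − I_T f‖_{L¹(T)}` on the triangle `T` with
vertices `p0, p1, p2`. -/
noncomputable def interpErr (p0 p1 p2 : ℝ × ℝ) (f : ℝ × ℝ → ℝ) : ℝ :=
  ∫ x in tri p0 p1 p2, |f x - interp p0 p1 p2 f x|

/-- The decrease `D_T(e,f)` of the `L¹` interpolation error when the triangle
with vertices `z0, z1, z2` is bisected from the midpoint of the edge `e = [z0,z1]`
to the opposite vertex `z2`. -/
noncomputable def Ddec (z0 z1 z2 : ℝ × ℝ) (f : ℝ × ℝ → ℝ) : ℝ :=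
  interpErr z0 z1 z2 f - interpErr z0 (midpoint ℝ z0 z1) z2 f -
    interpErr (midpoint ℝ z0 z1) z1 z2 f

theorem mem_tri_iff {p0 p1 p2 x : ℝ × ℝ} :
    x ∈ tri p0 p1 p2 ↔ ∃ a b c : ℝ, 0 ≤ a ∧ 0 ≤ b ∧ 0 ≤ c ∧ a + b + c = 1 ∧
      x = a • p0 + b • p1 + c • p2 := by
  constructor
  · intro hx
    have hsub : tri p0 p1 p2 ⊆ {x | ∃ a b c : ℝ, 0 ≤ a ∧ 0 ≤ b ∧ 0 ≤ c ∧ a + b + c = 1 ∧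
        x = a • p0 + b • p1 + c • p2} := by
      refine convexHull_min ?_ ?_
      · rintro y (rfl | rfl | rfl)
        · exact ⟨1, 0, 0, by simp⟩
        · exact ⟨0, 1, 0, by simp⟩
        · exact ⟨0, 0, 1, by simp⟩
      · rintro _ ⟨a, b, c, ha, hb, hc, h, rfl⟩ _ ⟨a', b', c', ha', hb', hc', h', rfl⟩
          s t hs ht hst
        refine ⟨s * a + t * a', s * b + t * b', s * c + t * c', by positivity, by positivity,
          by positivity, ?_, ?_⟩
        · linear_combination s * h + t * h' + hst
        · module
    exact hsub hx
  · rintro ⟨a, b, c, ha, hb, hc, h, rfl⟩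
    have hconv : Convex ℝ (tri p0 p1 p2) := convex_convexHull ℝ _
    have h0 : p0 ∈ tri p0 p1 p2 := subset_convexHull ℝ _ (by simp)
    have h1 : p1 ∈ tri p0 p1 p2 := subset_convexHull ℝ _ (by simp)
    have h2 : p2 ∈ tri p0 p1 p2 := subset_convexHull ℝ _ (by simp)
    have := hconv.sum_mem (t := Finset.univ) (w := ![a, b, c]) (z := ![p0, p1, p2])
      (by intro i _; fin_cases i <;> simpa) (by simpa [Fin.sum_univ_three] using h)
      (by intro i _; fin_cases i <;> simpa)
    simpa [Fin.sum_univ_three] using this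

theorem isCompact_tri (p0 p1 p2 : ℝ × ℝ) : IsCompact (tri p0 p1 p2) :=
  (Set.toFinite {p0, p1, p2}).isCompact_convexHull ℝ

theorem det2_ne_zero_of_affineIndependent {p0 p1 p2 : ℝ × ℝ}
    (h : AffineIndependent ℝ ![p0, p1, p2]) : det2 (p1 - p0) (p2 - p0) ≠ 0 := by
  intro hd
  have key : ∀ a b : ℝ, a • (p1 - p0) + b • (p2 - p0) = 0 → a = 0 ∧ b = 0 := by
    intro a b hab
    have := affineIndependent_iff.1 h Finset.univ ![-a - b, a, b]
      (by simp [Fin.sum_univ_three]; ring)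
      (by rw [← hab]; simp only [Fin.sum_univ_three, Matrix.cons_val]; module)
    exact ⟨by simpa using this 1 (by simp), by simpa using this 2 (by simp)⟩
  simp only [det2] at hd
  have h1 := key (p2 - p0).1 (-(p1 - p0).1)
    (by ext <;> simp at hd ⊢ <;> linarith)
  have h2 := key (p2 - p0).2 (-(p1 - p0).2)
    (by ext <;> simp at hd ⊢ <;> linarith)
  have h3 := key 1 0 (by
    ext
    · have := h1.2
      simp at this ⊢
      linarith
    · have := h2.2
      simp at this ⊢
      linarith)
  exact one_ne_zero h3.1

theorem interp_combination {p0 p1 p2 : ℝ × ℝ} (hd : det2 (p1 - p0) (p2 - p0) ≠ 0)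
    (f : ℝ × ℝ → ℝ) {a b c : ℝ} (h : a + b + c = 1) :
    interp p0 p1 p2 f (a • p0 + b • p1 + c • p2) = a * f p0 + b * f p1 + c * f p2 := by
  obtain rfl : a = 1 - b - c := by linarith
  rw [interp, div_eq_iff hd]
  simp only [det2, Prod.fst_add, Prod.snd_add, Prod.fst_sub, Prod.snd_sub, Prod.smul_fst,
    Prod.smul_snd, smul_eq_mul]
  ring

theorem continuous_interp (p0 p1 p2 : ℝ × ℝ) (f : ℝ × ℝ → ℝ) :
    Continuous (interp p0 p1 p2 f) := by
  unfold interp det2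
  fun_prop

theorem le_interp {p0 p1 p2 : ℝ × ℝ} (hd : det2 (p1 - p0) (p2 - p0) ≠ 0) {f : ℝ × ℝ → ℝ}
    (hconv : ConvexOn ℝ (tri p0 p1 p2) f) {x : ℝ × ℝ} (hx : x ∈ tri p0 p1 p2) :
    f x ≤ interp p0 p1 p2 f x := by
  obtain ⟨a, b, c, ha, hb, hc, h, rfl⟩ := mem_tri_iff.1 hx
  rw [interp_combination hd f h]
  have h0 : p0 ∈ tri p0 p1 p2 := subset_convexHull ℝ _ (by simp)
  have h1 : p1 ∈ tri p0 p1 p2 := subset_convexHull ℝ _ (by simp)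
  have h2 : p2 ∈ tri p0 p1 p2 := subset_convexHull ℝ _ (by simp)
  have := hconv.map_sum_le (t := Finset.univ) (w := ![a, b, c]) (p := ![p0, p1, p2])
    (by intro i _; fin_cases i <;> simpa) (by simpa [Fin.sum_univ_three] using h)
    (by intro i _; fin_cases i <;> simpa)
  simpa [Fin.sum_univ_three] using this

/-- The reference triangle with vertices `(0, 0)`, `(1, 0)`, `(0, 1)`. -/
def refTri : Set (ℝ × ℝ) := {p | 0 ≤ p.1 ∧ 0 ≤ p.2 ∧ p.1 + p.2 ≤ 1}

theorem isClosed_refTri : IsClosed refTri :=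
  (isClosed_le continuous_const continuous_fst).inter
    ((isClosed_le continuous_const continuous_snd).inter
      (isClosed_le (continuous_fst.add continuous_snd) continuous_const))

theorem isCompact_refTri : IsCompact refTri := by
  refine (isCompact_Icc (a := ((0 : ℝ), (0 : ℝ))) (b := (1, 1))).of_isClosed_subset
    isClosed_refTri ?_
  rintro ⟨x, y⟩ ⟨hx, hy, hxy⟩
  simp only at hx hy hxy
  exact ⟨⟨hx, hy⟩, ⟨by simp; linarith, by simp; linarith⟩⟩

theorem setIntegral_refTri_affine (α β γ : ℝ) :
    ∫ p in refTri, ((1 - p.1 - p.2) * α + p.1 * β + p.2 * γ) = (α + β + γ) / 6 := by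
  have hint : IntegrableOn (fun p : ℝ × ℝ => (1 - p.1 - p.2) * α + p.1 * β + p.2 * γ) refTri :=
    ContinuousOn.integrableOn_compact isCompact_refTri (by fun_prop)
  rw [← integral_indicator isClosed_refTri.measurableSet, Measure.volume_eq_prod,
    integral_prod _ (by
      rw [← Measure.volume_eq_prod]
      exact (integrable_indicator_iff isClosed_refTri.measurableSet).2 hint)]
  have inner : ∀ x : ℝ, ∫ y, refTri.indicator
      (fun p : ℝ × ℝ => (1 - p.1 - p.2) * α + p.1 * β + p.2 * γ) (x, y) =
      (Set.Icc (0 : ℝ) 1).indicator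
        (fun x => (1 - x) ^ 2 / 2 * α + x * (1 - x) * β + (1 - x) ^ 2 / 2 * γ) x := by
    intro x
    by_cases hx : x ∈ Set.Icc (0 : ℝ) 1
    · rw [Set.indicator_of_mem hx]
      have : (fun y => refTri.indicator
          (fun p : ℝ × ℝ => (1 - p.1 - p.2) * α + p.1 * β + p.2 * γ) (x, y)) =
          (Set.Icc (0 : ℝ) (1 - x)).indicator
            (fun y => (1 - x - y) * α + x * β + y * γ) := by
        funext y
        have : (x, y) ∈ refTri ↔ y ∈ Set.Icc (0 : ℝ) (1 - x) := by
          simp only [refTri, Set.mem_ofPred_eq, Set.mem_Icc]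
          constructor
          · rintro ⟨_, h, h'⟩; exact ⟨h, by linarith⟩
          · rintro ⟨h, h'⟩; exact ⟨hx.1, h, by linarith⟩
        simp only [Set.indicator, this]
      rw [this, integral_indicator measurableSet_Icc, integral_Icc_eq_integral_Ioc,
        ← intervalIntegral.integral_of_le (by linarith [hx.2])]
      rw [intervalIntegral.integral_eq_sub_of_hasDerivAt
        (f := fun y => ((1 - x) * y - y ^ 2 / 2) * α + x * y * β + y ^ 2 / 2 * γ)]
      · ring
      · intro y _
        have h1 := hasDerivAt_id' y
        have h2 := (h1.pow 2).div_const 2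
        convert! ((((h1.const_mul (1 - x)).sub h2).mul_const α).add
          ((h1.const_mul x).mul_const β)).add (h2.mul_const γ) using 1
        simp
      · exact Continuous.intervalIntegrable (by fun_prop) _ _
    · rw [Set.indicator_of_notMem hx]
      have : ∀ y, (x, y) ∉ refTri := by
        rintro y ⟨h1, h2, h3⟩
        simp only at h1 h2 h3
        exact hx ⟨h1, by linarith⟩
      simp [this]
  simp only [inner]
  rw [integral_indicator measurableSet_Icc, integral_Icc_eq_integral_Ioc,
    ← intervalIntegral.integral_of_le zero_le_one]
  rw [intervalIntegral.integral_eq_sub_of_hasDerivAt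
    (f := fun x => (x - x ^ 2 + x ^ 3 / 3) / 2 * α + (x ^ 2 / 2 - x ^ 3 / 3) * β +
      (x - x ^ 2 + x ^ 3 / 3) / 2 * γ)]
  · ring
  · intro x _
    have h1 := hasDerivAt_id' x
    have h2 := h1.pow 2
    have h3 := (h1.pow 3).div_const 3
    convert! ((((h1.sub h2).add h3).div_const 2).mul_const α).add
      (((h2.div_const 2).sub h3).mul_const β) |>.add
      ((((h1.sub h2).add h3).div_const 2).mul_const γ) using 1
    simp
    ring
  · exact Continuous.intervalIntegrable (by fun_prop) _ _

theorem setIntegral_tri_eq {p0 p1 p2 : ℝ × ℝ} (hd : det2 (p1 - p0) (p2 - p0) ≠ 0)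
    (g : ℝ × ℝ → ℝ) :
    ∫ x in tri p0 p1 p2, g x = |det2 (p1 - p0) (p2 - p0)| *
      ∫ q in refTri, g ((1 - q.1 - q.2) • p0 + q.1 • p1 + q.2 • p2) := by
  let φ : ℝ × ℝ → ℝ × ℝ := fun q => (1 - q.1 - q.2) • p0 + q.1 • p1 + q.2 • p2
  let L : ℝ × ℝ →L[ℝ] ℝ × ℝ := (Matrix.toLin (.finTwoProd ℝ) (.finTwoProd ℝ)
    !![(p1 - p0).1, (p2 - p0).1; (p1 - p0).2, (p2 - p0).2]).toContinuousLinearMap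
  have hφ : ∀ q, φ q = L q + p0 := by
    intro q
    ext <;> simp [φ, L, Matrix.toLin_finTwoProd_apply] <;> ring
  have hL : L.det = det2 (p1 - p0) (p2 - p0) := by
    simp only [L, LinearMap.det_toContinuousLinearMap, LinearMap.det_toLin,
      Matrix.det_fin_two_of, det2]
    ring
  have himg : tri p0 p1 p2 = φ '' refTri := by
    ext x
    rw [mem_tri_iff]
    constructor
    · rintro ⟨a, b, c, ha, hb, hc, h, rfl⟩
      obtain rfl : a = 1 - b - c := by linarith
      exact ⟨(b, c), ⟨hb, hc, by simp only; linarith⟩, rfl⟩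
    · rintro ⟨q, ⟨h1, h2, h3⟩, rfl⟩
      exact ⟨1 - q.1 - q.2, q.1, q.2, by linarith, h1, h2, by ring, rfl⟩
  have hinj : Function.Injective φ := by
    intro q r hqr
    rw [hφ, hφ, add_left_inj] at hqr
    have hu : IsUnit (LinearMap.det (L : ℝ × ℝ →ₗ[ℝ] ℝ × ℝ)) := by
      rw [isUnit_iff_ne_zero]
      exact fun h => hd (hL.symm.trans h)
    exact (LinearMap.isUnit_iff_ker_eq_bot _ |>.1
      ((LinearMap.isUnit_iff_isUnit_det _).2 hu) |> LinearMap.ker_eq_bot.1) hqr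
  have hder : ∀ q ∈ refTri, HasFDerivWithinAt φ L refTri q := by
    intro q _
    rw [funext hφ]
    exact (L.hasFDerivAt.add_const p0).hasFDerivWithinAt
  rw [himg, integral_image_eq_integral_abs_det_fderiv_smul volume
    isClosed_refTri.measurableSet hder hinj.injOn, hL]
  simp only [smul_eq_mul, φ]
  rw [integral_const_mul]

theorem setIntegral_interp {p0 p1 p2 : ℝ × ℝ} (hd : det2 (p1 - p0) (p2 - p0) ≠ 0)
    (f : ℝ × ℝ → ℝ) :
    ∫ x in tri p0 p1 p2, interp p0 p1 p2 f x =
      triArea p0 p1 p2 / 3 * (f p0 + f p1 + f p2) := by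
  rw [setIntegral_tri_eq hd]
  have h : ∀ q : ℝ × ℝ, interp p0 p1 p2 f ((1 - q.1 - q.2) • p0 + q.1 • p1 + q.2 • p2) =
      (1 - q.1 - q.2) * f p0 + q.1 * f p1 + q.2 * f p2 :=
    fun q => interp_combination hd f (by ring)
  simp only [h]
  rw [setIntegral_refTri_affine, triArea]
  ring

theorem interpErr_eq {p0 p1 p2 : ℝ × ℝ} (hd : det2 (p1 - p0) (p2 - p0) ≠ 0)
    {f : ℝ × ℝ → ℝ} (hf : Continuous f) (hconv : ConvexOn ℝ (tri p0 p1 p2) f) :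
    interpErr p0 p1 p2 f =
      triArea p0 p1 p2 / 3 * (f p0 + f p1 + f p2) - ∫ x in tri p0 p1 p2, f x := by
  have hK := isCompact_tri p0 p1 p2
  rw [← setIntegral_interp hd, ← integral_sub
    ((continuous_interp p0 p1 p2 f).continuousOn.integrableOn_compact hK)
    (hf.continuousOn.integrableOn_compact hK), interpErr]
  refine setIntegral_congr_fun hK.measurableSet fun x hx => ?_
  rw [abs_sub_comm, abs_of_nonneg (sub_nonneg.2 (le_interp hd hconv hx))]

theorem tri_eq_union_bisect (z0 z1 z2 : ℝ × ℝ) :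
    tri z0 z1 z2 = tri z0 (midpoint ℝ z0 z1) z2 ∪ tri (midpoint ℝ z0 z1) z1 z2 := by
  have hm : midpoint ℝ z0 z1 = (1 / 2 : ℝ) • z0 + (1 / 2 : ℝ) • z1 := by
    rw [midpoint_eq_smul_add, smul_add]; norm_num
  rw [hm]
  ext x
  simp only [Set.mem_union, mem_tri_iff]
  constructor
  · rintro ⟨a, b, c, ha, hb, hc, h, rfl⟩
    rcases le_total b a with hab | hab
    · left
      exact ⟨a - b, 2 * b, c, by linarith, by linarith, hc, by linarith, by module⟩
    · right
      exact ⟨2 * a, b - a, c, by linarith, by linarith, hc, by linarith, by module⟩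
  · rintro (⟨a, b, c, ha, hb, hc, h, rfl⟩ | ⟨a, b, c, ha, hb, hc, h, rfl⟩)
    · exact ⟨a + b / 2, b / 2, c, by linarith, by linarith, hc, by linarith, by module⟩
    · exact ⟨a / 2, a / 2 + b, c, by linarith, by linarith, hc, by linarith, by module⟩

theorem aedisjoint_bisect {z0 z1 z2 : ℝ × ℝ} (hd : det2 (z1 - z0) (z2 - z0) ≠ 0) :
    AEDisjoint volume (tri z0 (midpoint ℝ z0 z1) z2) (tri (midpoint ℝ z0 z1) z1 z2) := by
  have hm : midpoint ℝ z0 z1 = (1 / 2 : ℝ) • z0 + (1 / 2 : ℝ) • z1 := by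
    rw [midpoint_eq_smul_add, smul_add]; norm_num
  rw [hm]
  let w : ℝ × ℝ := (1 / 2 : ℝ) • z0 + (1 / 2 : ℝ) • z1 - z2
  let l : ℝ × ℝ →ₗ[ℝ] ℝ := w.1 • LinearMap.snd ℝ ℝ ℝ - w.2 • LinearMap.fst ℝ ℝ ℝ
  let s : AffineSubspace ℝ (ℝ × ℝ) := AffineSubspace.mk' z2 (LinearMap.ker l)
  have hs : ∀ x, x ∈ s ↔ l (x - z2) = 0 := fun x => by
    simp only [s, AffineSubspace.mem_mk', LinearMap.mem_ker, vsub_eq_sub]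
  have hl : ∀ a b c : ℝ, a + b + c = 1 → l (a • z0 + b • z1 + c • z2 - z2) =
      (b - a) / 2 * det2 (z1 - z0) (z2 - z0) := by
    intro a b c h
    obtain rfl : c = 1 - a - b := by linarith
    simp [l, w, det2]
    ring
  have hne : s ≠ ⊤ := by
    intro h
    have h0 : z0 ∈ s := by rw [h]; trivial
    rw [hs] at h0
    have := hl 1 0 0 (by norm_num)
    simp only [one_smul, zero_smul, add_zero] at this
    rw [h0] at this
    apply hd
    linarith
  refine measure_mono_null ?_ (Measure.addHaar_affineSubspace volume s hne)
  rintro x ⟨h1, h2⟩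
  obtain ⟨a, b, c, ha, hb, hc, h, rfl⟩ := mem_tri_iff.1 h1
  obtain ⟨a', b', c', ha', hb', hc', h', hx⟩ := mem_tri_iff.1 h2
  have e1 := hl (a + b / 2) (b / 2) c (by linarith)
  have e2 := hl (a' / 2) (a' / 2 + b') c' (by linarith)
  have r1 : (a + b / 2) • z0 + (b / 2) • z1 + c • z2 =
      a • z0 + b • ((1 / 2 : ℝ) • z0 + (1 / 2 : ℝ) • z1) + c • z2 := by module
  have r2 : (a' / 2) • z0 + (a' / 2 + b') • z1 + c' • z2 =
      a' • ((1 / 2 : ℝ) • z0 + (1 / 2 : ℝ) • z1) + b' • z1 + c' • z2 := by module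
  rw [r1] at e1
  rw [r2, ← hx, e1] at e2
  have e3 : -a = b' := by
    apply mul_right_cancel₀ hd
    linarith
  have ha0 : a = 0 := by linarith
  change _ ∈ s
  rw [hs, e1, ha0]
  ring

theorem integral_deriv2_mul_min {g g' g'' : ℝ → ℝ} (h1 : ∀ t, HasDerivAt g (g' t) t)
    (h2 : ∀ t, HasDerivAt g' (g'' t) t) (hc : Continuous g'') :
    ∫ t in (0 : ℝ)..1, g'' t * min t (1 - t) = g 0 + g 1 - 2 * g (1 / 2) := by
  have hi : ∀ a b, IntervalIntegrable (fun t => g'' t * min t (1 - t)) volume a b :=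
    fun a b => Continuous.intervalIntegrable (by fun_prop) _ _
  rw [← intervalIntegral.integral_add_adjacent_intervals (hi 0 (1 / 2)) (hi (1 / 2) 1)]
  have e1 : ∫ t in (0 : ℝ)..(1 / 2), g'' t * min t (1 - t) =
      ∫ t in (0 : ℝ)..(1 / 2), g'' t * t := by
    refine intervalIntegral.integral_congr fun t ht => ?_
    rw [Set.uIcc_of_le (by norm_num)] at ht
    rw [min_eq_left (by linarith [ht.2])]
  have e2 : ∫ t in (1 / 2 : ℝ)..1, g'' t * min t (1 - t) =
      ∫ t in (1 / 2 : ℝ)..1, g'' t * (1 - t) := by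
    refine intervalIntegral.integral_congr fun t ht => ?_
    rw [Set.uIcc_of_le (by norm_num)] at ht
    rw [min_eq_right (by linarith [ht.1])]
  rw [e1, e2, intervalIntegral.integral_eq_sub_of_hasDerivAt (f := fun t => g' t * t - g t)
    (fun t _ => by
      convert! ((h2 t).mul (hasDerivAt_id' t)).sub (h1 t) using 1
      ring) (Continuous.intervalIntegrable (by fun_prop) _ _),
    intervalIntegral.integral_eq_sub_of_hasDerivAt (f := fun t => g' t * (1 - t) + g t)
    (fun t _ => by
      convert! ((h2 t).mul ((hasDerivAt_id' t).const_sub 1)).add (h1 t) using 1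
      ring) (Continuous.intervalIntegrable (by fun_prop) _ _)]
  ring

theorem integral_hessian_mul_min {f : ℝ × ℝ → ℝ} (hf : ContDiff ℝ 2 f) (z0 z1 : ℝ × ℝ) :
    ∫ t in (0 : ℝ)..1,
      (fderiv ℝ (fderiv ℝ f) ((1 - t) • z0 + t • z1)) (z1 - z0) (z1 - z0) * min t (1 - t) =
      f z0 + f z1 - 2 * f (midpoint ℝ z0 z1) := by
  have hf' : ContDiff ℝ 1 (fderiv ℝ f) := hf.fderiv_right (by norm_num)
  have hγ : ∀ t : ℝ, HasDerivAt (fun t : ℝ => (1 - t) • z0 + t • z1) (z1 - z0) t := by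
    intro t
    convert! (((hasDerivAt_id' t).const_sub 1).smul_const z0).add
      ((hasDerivAt_id' t).smul_const z1) using 1
    module
  have hm : midpoint ℝ z0 z1 = (1 - 1 / 2 : ℝ) • z0 + (1 / 2 : ℝ) • z1 := by
    rw [midpoint_eq_smul_add, smul_add]; norm_num
  rw [integral_deriv2_mul_min (g := fun t => f ((1 - t) • z0 + t • z1))
    (g' := fun t => fderiv ℝ f ((1 - t) • z0 + t • z1) (z1 - z0))
    (fun t => ((hf.differentiable (by norm_num) _).hasFDerivAt.comp_hasDerivAt t (hγ t)))
    (fun t => by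
      have := ((hf'.differentiable (by norm_num) _).hasFDerivAt.comp_hasDerivAt t (hγ t))
      simpa using this.clm_apply (hasDerivAt_const t (z1 - z0)))
    (by
      have : Continuous (fderiv ℝ (fderiv ℝ f)) := hf'.continuous_fderiv (by norm_num)
      fun_prop), hm]
  simp

/-- for a convex `C²` function `f` on a nondegenerate triangle `T`
with vertices `z0, z1, z2` and edge `e = [z0,z1]`,
`D_T(e,f) = (|T|/6)·∫₀¹ ⟨d²f(z_t)(z1−z0), z1−z0⟩·min{t,1−t} dt`,
where `z_t = (1−t)z0 + t z1`. -/
theorem stmt5 (z0 z1 z2 : ℝ × ℝ) (hT : AffineIndependent ℝ ![z0, z1, z2])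
    (f : ℝ × ℝ → ℝ) (hf : ContDiff ℝ 2 f) (hconv : ConvexOn ℝ (tri z0 z1 z2) f) :
    Ddec z0 z1 z2 f = triArea z0 z1 z2 / 6 *
      ∫ t in (0 : ℝ)..1,
        (fderiv ℝ (fderiv ℝ f) ((1 - t) • z0 + t • z1)) (z1 - z0) (z1 - z0) *
          min t (1 - t) := by
  have hd := det2_ne_zero_of_affineIndependent hT
  have hm : midpoint ℝ z0 z1 = (1 / 2 : ℝ) • z0 + (1 / 2 : ℝ) • z1 := by
    rw [midpoint_eq_smul_add, smul_add]; norm_num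
  have hd1 : det2 (midpoint ℝ z0 z1 - z0) (z2 - z0) = det2 (z1 - z0) (z2 - z0) / 2 := by
    rw [hm]; simp [det2]; ring
  have hd2 : det2 (z1 - midpoint ℝ z0 z1) (z2 - midpoint ℝ z0 z1) =
      det2 (z1 - z0) (z2 - z0) / 2 := by
    rw [hm]; simp [det2]; ring
  have ha1 : triArea z0 (midpoint ℝ z0 z1) z2 = triArea z0 z1 z2 / 2 := by
    rw [triArea, hd1, abs_div, abs_two, triArea]
  have ha2 : triArea (midpoint ℝ z0 z1) z1 z2 = triArea z0 z1 z2 / 2 := by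
    rw [triArea, hd2, abs_div, abs_two, triArea]
  have hU := tri_eq_union_bisect z0 z1 z2
  have hc1 : ConvexOn ℝ (tri z0 (midpoint ℝ z0 z1) z2) f :=
    hconv.subset (hU ▸ Set.subset_union_left) (convex_convexHull ℝ _)
  have hc2 : ConvexOn ℝ (tri (midpoint ℝ z0 z1) z1 z2) f :=
    hconv.subset (hU ▸ Set.subset_union_right) (convex_convexHull ℝ _)
  have hcont := hf.continuous
  have hsplit : ∫ x in tri z0 z1 z2, f x = (∫ x in tri z0 (midpoint ℝ z0 z1) z2, f x) +
      ∫ x in tri (midpoint ℝ z0 z1) z1 z2, f x := by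
    rw [hU]
    exact setIntegral_union₀ (aedisjoint_bisect hd)
      (isCompact_tri _ _ _).measurableSet.nullMeasurableSet
      (hcont.continuousOn.integrableOn_compact (isCompact_tri _ _ _))
      (hcont.continuousOn.integrableOn_compact (isCompact_tri _ _ _))
  rw [Ddec, interpErr_eq hd hcont hconv,
    interpErr_eq (by rw [hd1]; exact div_ne_zero hd two_ne_zero) hcont hc1,
    interpErr_eq (by rw [hd2]; exact div_ne_zero hd two_ne_zero) hcont hc2,
    ha1, ha2, hsplit, integral_hessian_mul_min hf]
  ring
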